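/- Let μ be an equilibrium measure of F. There exists a finite set E₀ ⊆ ℂ with {g(w) : w ∈ ℂ, f(w) ∈ E₀} = E₀ which contains every finite set E′ ⊆ ℂ satisfying {g(w) : w ∈ ℂ, f(w) ∈ E′} = E′ (E₀ is the largest finite subset of ℂ invariant by F⁻¹). Moreover, defining forward images F(S) := {f(w) : w ∈ ℂ, g(w) ∈ S} and the exceptional set E := ⋃_{n≥0} Fⁿ(E₀), for every z ∈ ℂ the following are equivalent: (a) for every bounded continuous φ : ℂ → ℝ, Λⁿφ(z) → ∫ φ dμ as n → ∞; (b) z ∉ E. -/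

import Mathlib

/-!
Write `d = deg f`, `e = deg g`, so `e < d`, and `κ` for the number of critical values of `f`. The
functional `φ ↦ Λⁿφ(z)` averages `φ` over the `dⁿ` endpoints of backward paths of length `n`
starting at `z`.

*Inverse branches* (`exists_branches`). On a disc whose points do not reach a critical value of `f`
in fewer than `N` backward steps, almost all backward paths are given by holomorphic functions. In
the step from `n` to `n + 1` a branch has to be dropped only if it meets a critical value; the
branches of order `n` together take each value at most `eⁿ` times, because the equation `g = a` has
at most `e` solutions, so at most `κ eⁿ` out of `dⁿ` are dropped. The total loss is a tail of a
convergent geometric series.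

*Near-equidistribution* (`near_equidistribution`). The branches stay in a fixed disc, hence are
equicontinuous by the Schwarz lemma. Comparing `Λⁿφ(z)` with the average of `Λⁿφ` over a small disc
around `z`, the equilibrium property gives `limsup |Λⁿφ(z) - ∫ φ dμ| ≤ 2 ‖φ‖ err N` outside a finite
set, where `err N → 0`.

*No atoms* (`potential_bound`, `exists_bump`). By a resultant identity `Λ log‖· - a‖` is `1/d` times
the sum of the `e` potentials `log‖· - f(u)‖`, `g(u) = a`, plus a constant. As `e/d < 1`, the
averages of `Λⁿ log‖· - a‖` over the unit disc are bounded below uniformly in `n`, and test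
functions concentrated at `a` have arbitrarily small integral.

*Conclusion.* On a finite backward invariant set `S`, a test function equal to `1` on `S` has
`Λⁿφ = 1` forever. If `∫ φ dμ` is small, near-equidistribution fails on `S`; this confines all such
sets to one finite set (`exists_confinement`), and their union is `E₀`. The same test function shows
that convergence fails at every point from which `E₀` is reached. Conversely
`θ = limsup |Λⁿφ - ∫ φ dμ|` satisfies `θ ≤ Λθ` and has finite superlevel sets. If `θ(z) > 0`, the
points of the backward orbit of `z` where `θ` is maximal form a finite backward invariant set, so
`z` lies in a forward image of `E₀` (`maximum_principle`, `tendsto_of_not_mem`).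
-/


open MeasureTheory Polynomial Filter
open scoped ENNReal

/-- The Perron–Frobenius operator of the polynomial correspondence `F = f ∘ g⁻¹`:
`Λφ(z) = (deg f)⁻¹ Σ_w φ(g(w))`, the sum running over the roots `w` of `f - z`
counted with multiplicity. -/
noncomputable def Lam (f g : Polynomial ℂ) (φ : ℂ → ℝ) : ℂ → ℝ :=
  fun z => (f.natDegree : ℝ)⁻¹ * (((f - C z).roots).map (fun w => φ (g.eval w))).sum

/-- An equilibrium measure of the correspondence `F = f ∘ g⁻¹`: a compactly supported
Borel probability measure `μ` on `ℂ` such that for every compactly supported probability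
measure `ν` with bounded density with respect to Lebesgue measure and every bounded
continuous `φ`, `∫ Λⁿφ dν → ∫ φ dμ`. -/
def IsEquilibrium (f g : Polynomial ℂ) (μ : Measure ℂ) : Prop :=
  IsProbabilityMeasure μ ∧ (∃ K : Set ℂ, IsCompact K ∧ μ Kᶜ = 0) ∧
  ∀ ν : Measure ℂ, IsProbabilityMeasure ν →
    (∃ K : Set ℂ, IsCompact K ∧ ν Kᶜ = 0) →
    (∃ h : ℂ → ℝ≥0∞, (∃ B : ℝ≥0∞, B < ⊤ ∧ ∀ z, h z ≤ B) ∧ ν = volume.withDensity h) →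
    ∀ φ : ℂ → ℝ, Continuous φ → (∃ M : ℝ, ∀ z, |φ z| ≤ M) →
      Tendsto (fun n => ∫ z, ((Lam f g)^[n] φ) z ∂ν) atTop (nhds (∫ z, φ z ∂μ))

/-! ### Roots and elementary properties of `Λ` -/

/-- An enumeration of the roots of `f - z`, repeated according to multiplicity. -/
noncomputable def rt (f : ℂ[X]) (z : ℂ) : Fin f.natDegree → ℂ :=
  Classical.epsilon fun u : Fin f.natDegree → ℂ => (f - C z).roots = Finset.univ.val.map u

lemma roots_eq_rt (f : ℂ[X]) (z : ℂ) : (f - C z).roots = Finset.univ.val.map (rt f z) := by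
  have hcard : Multiset.card (f - C z).roots = f.natDegree := by
    rw [← natDegree_sub_C (p := f) (a := z)]
    exact (splits_iff_card_roots.1 (IsAlgClosed.splits _))
  have : ∃ u : Fin f.natDegree → ℂ, (f - C z).roots = Finset.univ.val.map u := by
    rw [← hcard]
    refine ⟨fun i => (f - C z).roots.toList.get (i.cast (by simp)), ?_⟩
    have hl : (f - C z).roots = ((f - C z).roots.toList : Multiset ℂ) := by simp
    generalize (f - C z).roots = s at *
    have h2 : List.ofFn (fun i : Fin (Multiset.card s) => s.toList.get (i.cast (by simp)))
        = s.toList := by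
      apply List.ext_get <;> simp
    rw [Fin.univ_val_map, h2]
    simp
  exact Classical.epsilon_spec this

lemma Lam_apply (f g : ℂ[X]) (φ : ℂ → ℝ) (z : ℂ) :
    Lam f g φ z = (f.natDegree : ℝ)⁻¹ * ∑ i, φ (g.eval (rt f z i)) := by
  rw [Lam, roots_eq_rt, Multiset.map_map]
  rfl

lemma sub_C_ne_zero {f : ℂ[X]} (hf : 0 < f.natDegree) (z : ℂ) : f - C z ≠ 0 := by
  intro h
  have := natDegree_sub_C (p := f) (a := z)
  rw [h, natDegree_zero] at this
  omega

lemma mem_rt {f : ℂ[X]} (hf : 0 < f.natDegree) (z w : ℂ) :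
    (∃ i, rt f z i = w) ↔ f.eval w = z := by
  have h : w ∈ (f - C z).roots ↔ f.eval w = z := by
    rw [mem_roots (sub_C_ne_zero hf z)]
    simp [sub_eq_zero]
  rw [← h, roots_eq_rt]
  simp

lemma eval_rt {f : ℂ[X]} (hf : 0 < f.natDegree) (z : ℂ) (i) : f.eval (rt f z i) = z :=
  (mem_rt hf z _).1 ⟨i, rfl⟩

lemma eval_sub_eq_prod (f : ℂ[X]) (z x : ℂ) (hf : 0 < f.natDegree) :
    f.eval x - z = f.leadingCoeff * ∏ i, (x - rt f z i) := by
  have h := (IsAlgClosed.splits (f - C z)).eval_eq_prod_roots x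
  rw [roots_eq_rt, Multiset.map_map] at h
  have hl : (f - C z).leadingCoeff = f.leadingCoeff := by
    rw [leadingCoeff, leadingCoeff, natDegree_sub_C, coeff_sub, coeff_C, if_neg hf.ne', sub_zero]
  rw [hl, eval_sub, eval_C] at h
  exact h

/-- `Λ` as a linear operator on functions. -/
noncomputable def LamL (f g : ℂ[X]) : (ℂ → ℝ) →ₗ[ℝ] (ℂ → ℝ) where
  toFun := Lam f g
  map_add' φ ψ := by
    ext z; simp [Lam_apply, Finset.sum_add_distrib, mul_add]
  map_smul' c φ := by
    ext z; simp [Lam_apply, ← Finset.mul_sum]; ring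

lemma LamL_pow (f g : ℂ[X]) (n : ℕ) (φ : ℂ → ℝ) : (LamL f g ^ n) φ = (Lam f g)^[n] φ := by
  rw [Module.End.pow_apply]; rfl

lemma Lam_const {f : ℂ[X]} (hf : 0 < f.natDegree) (g : ℂ[X]) (c : ℝ) :
    Lam f g (fun _ => c) = fun _ => c := by
  ext z
  have : (f.natDegree : ℝ) ≠ 0 := by positivity
  simp [Lam_apply, this]

lemma Lam_iter_const {f : ℂ[X]} (hf : 0 < f.natDegree) (g : ℂ[X]) (c : ℝ) (n : ℕ) :
    (Lam f g)^[n] (fun _ => c) = fun _ => c :=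
  Function.iterate_fixed (Lam_const hf g c) n

/-- `Reach f g n z y`: `y` is the endpoint of a backward path of length `n` starting at `z`,
that is `y ∈ F⁻ⁿ(z)`. -/
def Reach (f g : ℂ[X]) : ℕ → ℂ → ℂ → Prop
  | 0, z, y => z = y
  | n + 1, z, y => ∃ w, f.eval w = z ∧ Reach f g n (g.eval w) y

lemma Reach.snoc {f g : ℂ[X]} {n : ℕ} {z w : ℂ} (h : Reach f g n z (f.eval w)) :
    Reach f g (n + 1) z (g.eval w) := by
  induction n generalizing z with
  | zero => exact ⟨w, h.symm, rfl⟩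
  | succ n ih =>
    obtain ⟨v, hv, h⟩ := h
    exact ⟨v, hv, ih h⟩

/-- Forward image under the correspondence. -/
def Fwd (f g : ℂ[X]) (S : Set ℂ) : Set ℂ := (fun w => f.eval w) '' ((fun w => g.eval w) ⁻¹' S)

lemma mem_Fwd_iter (f g : ℂ[X]) (n : ℕ) (S : Set ℂ) (z : ℂ) :
    z ∈ (Fwd f g)^[n] S ↔ ∃ y ∈ S, Reach f g n z y := by
  induction n generalizing z with
  | zero => simp [Reach]
  | succ n ih =>
    rw [Function.iterate_succ_apply']
    constructor
    · rintro ⟨w, hw, rfl⟩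
      obtain ⟨y, hy, h⟩ := (ih _).1 hw
      exact ⟨y, hy, w, rfl, h⟩
    · rintro ⟨y, hy, w, rfl, h⟩
      exact ⟨w, (ih _).2 ⟨y, hy, h⟩, rfl⟩

lemma finite_fiber {g : ℂ[X]} (hg : 0 < g.natDegree) (a : ℂ) : {w | g.eval w = a}.Finite := by
  refine (Set.finite_range (rt g a)).subset fun w hw => ?_
  exact (mem_rt hg a w).2 hw

lemma finite_Fwd {f g : ℂ[X]} (hg : 0 < g.natDegree) {S : Set ℂ} (hS : S.Finite) :
    (Fwd f g S).Finite := by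
  refine Set.Finite.image _ (hS.preimage' fun a _ => ?_)
  exact finite_fiber hg a

lemma finite_Fwd_iter {f g : ℂ[X]} (hg : 0 < g.natDegree) {S : Set ℂ} (hS : S.Finite) (n : ℕ) :
    ((Fwd f g)^[n] S).Finite := by
  induction n with
  | zero => simpa
  | succ n ih => rw [Function.iterate_succ_apply']; exact finite_Fwd hg ih

lemma Lam_iter_mono {f g : ℂ[X]} (hf : 0 < f.natDegree) {n : ℕ} {φ ψ : ℂ → ℝ} {z : ℂ}
    (h : ∀ y, Reach f g n z y → φ y ≤ ψ y) :
    (Lam f g)^[n] φ z ≤ (Lam f g)^[n] ψ z := by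
  induction n generalizing z with
  | zero => exact h z rfl
  | succ n ih =>
    rw [Function.iterate_succ_apply', Function.iterate_succ_apply', Lam_apply, Lam_apply]
    gcongr with i
    exact ih fun y hy => h y ⟨_, eval_rt hf z i, hy⟩

lemma Lam_iter_abs_le {f g : ℂ[X]} (hf : 0 < f.natDegree) {n : ℕ} {φ : ℂ → ℝ} {M : ℝ}
    (h : ∀ y, |φ y| ≤ M) (z : ℂ) : |(Lam f g)^[n] φ z| ≤ M := by
  have h1 := Lam_iter_mono (f := f) (g := g) (n := n) (φ := φ) (ψ := fun _ => M) (z := z) hf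
    fun y _ => (abs_le.1 (h y)).2
  have h2 := Lam_iter_mono (f := f) (g := g) (n := n) (φ := fun _ => -M) (ψ := φ) (z := z) hf
    fun y _ => (abs_le.1 (h y)).1
  rw [Lam_iter_const hf] at h1 h2
  exact abs_le.2 ⟨h2, h1⟩

/-- The number of roots being constant, limits of the enumerated roots are again the roots of the
limit polynomial; compactness then gives the continuity of `Λφ`. -/
lemma continuous_Lam {f : ℂ[X]} (hf : 0 < f.natDegree) (g : ℂ[X]) {φ : ℂ → ℝ}
    (hφ : Continuous φ) : Continuous (Lam f g φ) := by
  rw [continuous_iff_continuousAt]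
  intro z
  rw [ContinuousAt, tendsto_iff_ultrafilter]
  intro U hU
  have hK : IsCompact ((fun w => f.eval w) ⁻¹' Metric.closedBall z 1) :=
    (f.isProperMap_eval (natDegree_pos_iff_degree_pos.1 hf)).isCompact_preimage
      (isCompact_closedBall z 1)
  have hK' : IsCompact (Set.univ.pi fun _ : Fin f.natDegree =>
      (fun w => f.eval w) ⁻¹' Metric.closedBall z 1) := isCompact_univ_pi fun _ => hK
  have hmem : ∀ᶠ x in (U : Filter ℂ), rt f x ∈ (Set.univ.pi fun _ : Fin f.natDegree =>
      (fun w => f.eval w) ⁻¹' Metric.closedBall z 1) := by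
    filter_upwards [hU (Metric.closedBall_mem_nhds z one_pos)] with x hx i _
    rw [Set.mem_preimage, eval_rt hf]
    exact hx
  obtain ⟨u, -, hu⟩ := hK'.ultrafilter_le_nhds (U.map (rt f)) (Filter.le_principal_iff.2 hmem)
  have hu : Tendsto (rt f) U (nhds u) := hu
  have hu' : ∀ i, Tendsto (fun x => rt f x i) U (nhds (u i)) := fun i => (tendsto_pi_nhds.1 hu) i
  have hpoly : f - C z = C f.leadingCoeff * (Finset.univ.val.map fun i => X - C (u i)).prod := by
    apply Polynomial.funext
    intro x
    have h1 : Tendsto (fun y => f.eval x - y) U (nhds (f.eval x - z)) :=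
      tendsto_const_nhds.sub hU
    have h2 : Tendsto (fun y => f.leadingCoeff * ∏ i, (x - rt f y i)) U
        (nhds (f.leadingCoeff * ∏ i, (x - u i))) :=
      tendsto_const_nhds.mul (tendsto_finsetProd _ fun i _ => tendsto_const_nhds.sub (hu' i))
    have h3 := tendsto_nhds_unique (h1.congr fun y => eval_sub_eq_prod f y x hf) h2
    rw [eval_sub, eval_C, h3, eval_mul, eval_C, eval_multiset_prod, Multiset.map_map]
    congr 2
    ext i
    simp
  have hroots : (f - C z).roots = Finset.univ.val.map u := by
    rw [hpoly, roots_C_mul _ (leadingCoeff_ne_zero.2 (ne_zero_of_natDegree_gt hf))]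
    have := roots_multiset_prod_X_sub_C (Finset.univ.val.map u)
    rwa [Multiset.map_map] at this
  have hz : Lam f g φ z = (f.natDegree : ℝ)⁻¹ * ∑ i, φ (g.eval (u i)) := by
    rw [Lam, hroots, Multiset.map_map]; rfl
  rw [hz]
  refine Tendsto.congr (fun x => (Lam_apply f g φ x).symm) ?_
  refine tendsto_const_nhds.mul (tendsto_finsetSum _ fun i _ => ?_)
  exact ((hφ.comp g.continuous).tendsto (u i)).comp (hu' i)

lemma continuous_Lam_iter {f : ℂ[X]} (hf : 0 < f.natDegree) (g : ℂ[X]) {φ : ℂ → ℝ}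
    (hφ : Continuous φ) (n : ℕ) : Continuous ((Lam f g)^[n] φ) := by
  induction n with
  | zero => exact hφ
  | succ n ih => rw [Function.iterate_succ_apply']; exact continuous_Lam hf g ih

/-! ### Invariant discs and inverse branches -/

/-- Since `deg g < deg f`, backward paths starting in a large enough closed disc stay in it. -/
lemma exists_invariant_radius {f g : ℂ[X]} (hdeg : g.degree < f.degree) (R₀ : ℝ) :
    ∃ R, R₀ ≤ R ∧ 0 < R ∧ ∀ w, ‖f.eval w‖ ≤ R → ‖g.eval w‖ ≤ R := by
  have h := (isLittleO_cobounded_of_degree_lt (R := ℂ) hdeg).bound (c := 1) one_pos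
  rw [Metric.cobounded_eq_cocompact] at h
  obtain ⟨K, hK, hKs⟩ := mem_cocompact.1 h
  obtain ⟨B, hB⟩ := hK.exists_bound_of_continuousOn (f := fun w => g.eval w)
    g.continuous.continuousOn
  refine ⟨max (max R₀ B) 1, by simp, by positivity, fun w hw => ?_⟩
  by_cases hwK : w ∈ K
  · exact (hB w hwK).trans (by simp)
  · have := hKs hwK
    simp only [Set.mem_ofPred_eq, one_mul] at this
    exact this.trans hw

lemma Reach.norm_le {f g : ℂ[X]} {R : ℝ} (hR : ∀ w, ‖f.eval w‖ ≤ R → ‖g.eval w‖ ≤ R)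
    {n : ℕ} {z y : ℂ} (h : Reach f g n z y) (hz : ‖z‖ ≤ R) : ‖y‖ ≤ R := by
  induction n generalizing z with
  | zero => exact h ▸ hz
  | succ n ih =>
    obtain ⟨w, rfl, h⟩ := h
    exact ih h (hR w hz)

lemma rt_injective {f : ℂ[X]} (hf : 0 < f.natDegree) {y : ℂ}
    (hy : ∀ w, f.eval w = y → f.derivative.eval w ≠ 0) : Function.Injective (rt f y) := by
  have hnd : (f - C y).roots.Nodup := by
    rw [Multiset.nodup_iff_count_le_one]
    intro w
    rw [count_roots]
    by_contra! hlt
    have h := (one_lt_rootMultiplicity_iff_isRoot (sub_C_ne_zero hf y)).1 hlt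
    refine hy w ?_ ?_
    · simpa [sub_eq_zero] using h.1
    · simpa using h.2
  rw [roots_eq_rt] at hnd
  have := Multiset.inj_on_of_nodup_map hnd
  exact fun i j hij => this i (by simp) j (by simp) hij

lemma Lam_eq_of_injective {f : ℂ[X]} (hf : 0 < f.natDegree) (g : ℂ[X]) (φ : ℂ → ℝ) {y : ℂ}
    {u : Fin f.natDegree → ℂ} (hu : Function.Injective u) (hy : ∀ i, f.eval (u i) = y) :
    Lam f g φ y = (f.natDegree : ℝ)⁻¹ * ∑ i, φ (g.eval (u i)) := by
  have hle : Finset.univ.val.map u ≤ (f - C y).roots := by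
    rw [Multiset.le_iff_subset (Finset.univ.nodup.map hu)]
    intro w hw
    obtain ⟨i, -, rfl⟩ := Multiset.mem_map.1 hw
    rw [mem_roots (sub_C_ne_zero hf y)]
    simp [hy i]
  have heq := Multiset.eq_of_le_of_card_le hle (by rw [roots_eq_rt]; simp)
  rw [Lam, ← heq, Multiset.map_map]
  rfl

/-- Over a disc, a holomorphic map avoiding the critical values of `f` lifts through `f` to
`deg f` holomorphic maps with pairwise disjoint graphs. -/
lemma exists_lifts {f : ℂ[X]} (hf : 0 < f.natDegree) {z : ℂ} {r : ℝ} (hr : 0 < r) {h : ℂ → ℂ}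
    (hh : DifferentiableOn ℂ h (Metric.ball z r))
    (hcv : ∀ ζ ∈ Metric.ball z r, ∀ w, f.eval w = h ζ → f.derivative.eval w ≠ 0) :
    ∃ W : Fin f.natDegree → ℂ → ℂ, (∀ i, DifferentiableOn ℂ (W i) (Metric.ball z r)) ∧
      (∀ ζ ∈ Metric.ball z r, ∀ i, f.eval (W i ζ) = h ζ) ∧
      (∀ ζ ∈ Metric.ball z r, Function.Injective fun i => W i ζ) := by
  classical
  have hzr : z ∈ Metric.ball z r := Metric.mem_ball_self hr
  have : ContractibleSpace (Metric.ball z r) :=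
    (convex_ball z r).contractibleSpace ⟨z, hzr⟩
  have : LocallyPathConnectedSpace (Metric.ball z r) := Metric.isOpen_ball.locallyPathConnectedSpace
  let hc : C(Metric.ball z r, ℂ) :=
    ⟨fun ζ => h ζ, hh.continuousOn.comp_continuous continuous_subtype_val fun ζ => ζ.2⟩
  have hs : ∀ a, hc a ∈ (f.eval '' {k | f.derivative.eval k = 0})ᶜ := by
    rintro a ⟨k, hk, hka⟩
    exact hcv a a.2 k hka hk
  have huniq := fun (a₀ : Metric.ball z r) (e₀ : ℂ) (he : f.eval e₀ = hc a₀) =>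
    f.isCoveringMapOn_eval.existsUnique_continuousMap_lifts hc he hs
  choose G hG hGu using fun i => huniq ⟨z, hzr⟩ (rt f (h z) i) (eval_rt hf _ i)
  have hGf : ∀ i a, f.eval (G i a) = h a := fun i a => congrFun (hG i).2 a
  let W : Fin f.natDegree → ℂ → ℂ := fun i ζ => if hζ : ζ ∈ Metric.ball z r then G i ⟨ζ, hζ⟩ else 0
  have hW : ∀ i ζ (hζ : ζ ∈ Metric.ball z r), W i ζ = G i ⟨ζ, hζ⟩ := fun i ζ hζ => dif_pos hζ
  have hWf : ∀ ζ ∈ Metric.ball z r, ∀ i, f.eval (W i ζ) = h ζ := fun ζ hζ i => by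
    rw [hW i ζ hζ]; exact hGf i ⟨ζ, hζ⟩
  refine ⟨W, fun i ζ hζ => ?_, hWf, fun ζ hζ i j hij => ?_⟩
  · have hnhds : Metric.ball z r ∈ nhds ζ := Metric.isOpen_ball.mem_nhds hζ
    have hcont : ContinuousOn (W i) (Metric.ball z r) := by
      rw [continuousOn_iff_continuous_domRestrict]
      refine (G i).continuous.congr fun a => ?_
      exact (hW i a a.2).symm
    refine DifferentiableAt.differentiableWithinAt ?_
    refine (HasDerivAt.of_comp_left (f := fun w => f.eval w) (h := h) (hcont.continuousAt hnhds)
      (f.hasDerivAt _) (hh.differentiableAt hnhds).hasDerivAt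
      ?_ ?_).differentiableAt
    · exact hcv ζ hζ _ (hWf ζ hζ i)
    · filter_upwards [hnhds] with x hx using hWf x hx i
  · -- two lifts agreeing at one point agree at the centre, where they start at distinct roots
    simp only [hW _ ζ hζ] at hij
    have hEq : G i = G j :=
      (huniq ⟨ζ, hζ⟩ (G i ⟨ζ, hζ⟩) (hGf i _)).unique ⟨rfl, (hG i).2⟩ ⟨hij.symm, (hG j).2⟩
    refine rt_injective hf (hcv z hzr) ?_
    rw [← (hG i).1, ← (hG j).1, hEq]

/-- The set of critical values of `f`. -/
def CV (f : ℂ[X]) : Set ℂ := (fun w => f.eval w) '' {w | f.derivative.eval w = 0}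

lemma finite_CV {f : ℂ[X]} (hf : 0 < f.natDegree) : (CV f).Finite := by
  refine Set.Finite.image _ ?_
  have h0 : f.derivative ≠ 0 := fun h =>
    hf.ne' (derivative_eq_zero.1 h)
  exact (finite_setOfPred_isRoot h0)

/-- A family of `n`-th inverse branches on the disc `ball z r`: finitely many holomorphic functions
whose values at `ζ` lie in `F⁻ⁿ(ζ)`, which together take each value at most `(deg g)ⁿ` times, and
which compute `Λⁿφ` up to the relative error `ε`. -/
structure Branches (f g : ℂ[X]) (z : ℂ) (r : ℝ) (n : ℕ) (ε : ℝ) where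
  /-- The index type of the branches. -/
  ι : Type
  /-- There are finitely many branches. -/
  fin : Fintype ι
  /-- The branches. -/
  h : ι → ℂ → ℂ
  diff : ∀ i, DifferentiableOn ℂ (h i) (Metric.ball z r)
  reach : ∀ i, ∀ ζ ∈ Metric.ball z r, Reach f g n ζ (h i ζ)
  encard_le : ∀ a, {p : ι × ℂ | p.2 ∈ Metric.ball z r ∧ h p.1 p.2 = a}.encard ≤
    ((g.natDegree ^ n : ℕ) : ℕ∞)
  card_le : Fintype.card ι ≤ f.natDegree ^ n
  approx : ∀ (φ : ℂ → ℝ) (M : ℝ), (∀ y, |φ y| ≤ M) → ∀ ζ ∈ Metric.ball z r,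
    |(Lam f g)^[n] φ ζ - ((f.natDegree : ℝ) ^ n)⁻¹ * ∑ i, φ (h i ζ)| ≤ M * ε

lemma Branches.zero (f g : ℂ[X]) (z : ℂ) (r : ℝ) : Nonempty (Branches f g z r 0 0) := by
  refine ⟨⟨Unit, inferInstance, fun _ ζ => ζ, fun _ => differentiableOn_id, fun _ ζ _ => rfl,
    fun a => ?_, by simp, fun φ M _ ζ _ => by simp⟩⟩
  refine (Set.encard_le_encard (t := {((), a)}) ?_).trans (by simp)
  rintro ⟨⟨⟩, ζ⟩ ⟨-, h⟩
  simpa using h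

/-- The branches that meet a critical value of `f` are dropped, at the cost `κ (deg g/deg f)ⁿ`
with `κ` the number of critical values; the others are lifted through `f` and composed with `g`. -/
lemma Branches.step {f g : ℂ[X]} (hf : 0 < f.natDegree) (hg : 0 < g.natDegree) {z : ℂ} {r : ℝ}
    (hr : 0 < r) {n : ℕ} {ε : ℝ} (B : Branches f g z r n ε) :
    Nonempty (Branches f g z r (n + 1)
      (ε + (CV f).ncard * ((g.natDegree : ℝ) / f.natDegree) ^ n)) ∧
    ((∀ ζ ∈ Metric.ball z r, ∀ c ∈ CV f, ¬ Reach f g n ζ c) →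
      Nonempty (Branches f g z r (n + 1) ε)) := by
  classical
  obtain ⟨ι, fin, h, hdiff, hreach, henc, hcard, happ⟩ := B
  let good : ι → Prop := fun i => ∀ ζ ∈ Metric.ball z r, h i ζ ∉ CV f
  have hlift : ∀ i : {i // good i}, ∃ W : Fin f.natDegree → ℂ → ℂ,
      (∀ j, DifferentiableOn ℂ (W j) (Metric.ball z r)) ∧
      (∀ ζ ∈ Metric.ball z r, ∀ j, f.eval (W j ζ) = h i ζ) ∧
      (∀ ζ ∈ Metric.ball z r, Function.Injective fun j => W j ζ) := fun i =>
    exists_lifts hf hr (hdiff i) fun ζ hζ w hw h0 => i.2 ζ hζ ⟨w, h0, hw⟩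
  choose W hWd hWf hWi using hlift
  have hd : (0 : ℝ) < f.natDegree := by exact_mod_cast hf
  -- a branch is bad through one of at most `κ (deg g)ⁿ` pairs (branch, point)
  have hbad : (Fintype.card {i // ¬ good i} : ℝ) ≤ (CV f).ncard * (g.natDegree : ℝ) ^ n := by
    have h1 : ({i | ¬ good i} : Set ι).encard ≤
        (⋃ c ∈ CV f, {p : ι × ℂ | p.2 ∈ Metric.ball z r ∧ h p.1 p.2 = c}).encard := by
      have : ∀ i : ι, ∃ ζ, ¬ good i → ζ ∈ Metric.ball z r ∧ h i ζ ∈ CV f := fun i => by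
        by_cases hi : good i
        · exact ⟨0, fun h => absurd hi h⟩
        · simp only [good, not_forall, not_not] at hi
          obtain ⟨ζ, h1, h2⟩ := hi
          exact ⟨ζ, fun _ => ⟨h1, h2⟩⟩
      choose ζ hζ using this
      refine Set.encard_le_encard_of_injOn (f := fun i => (i, ζ i)) (fun i hi => ?_)
        (fun i _ j _ hij => (Prod.ext_iff.1 hij).1)
      simp only [Set.mem_iUnion]
      exact ⟨_, (hζ i hi).2, (hζ i hi).1, rfl⟩
    have h2 : (⋃ c ∈ CV f, {p : ι × ℂ | p.2 ∈ Metric.ball z r ∧ h p.1 p.2 = c}).encard ≤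
        (((CV f).ncard * g.natDegree ^ n : ℕ) : ℕ∞) := by
      have hfin := finite_CV hf
      have hset : (⋃ c ∈ CV f, {p : ι × ℂ | p.2 ∈ Metric.ball z r ∧ h p.1 p.2 = c}) =
        ⋃ c ∈ hfin.toFinset, {p : ι × ℂ | p.2 ∈ Metric.ball z r ∧ h p.1 p.2 = c} := by simp
      rw [hset]
      refine (Finset.set_encard_biUnion_le _ _).trans ?_
      refine (Finset.sum_le_sum fun c _ => henc c).trans ?_
      rw [Finset.sum_const, Set.ncard_eq_toFinset_card _ hfin]
      simp
    have h3 := h1.trans h2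
    rw [Set.encard_eq_coe_toFinset_card, Nat.cast_le] at h3
    have h4 : Fintype.card {i // ¬ good i} ≤ (CV f).ncard * g.natDegree ^ n := by
      rw [Fintype.card_subtype]
      convert h3 using 2
      ext; simp
    exact_mod_cast h4
  have key : ∀ ε', ε + (Fintype.card {i // ¬ good i} : ℝ) / (f.natDegree : ℝ) ^ n ≤ ε' →
      Nonempty (Branches f g z r (n + 1) ε') := by
    intro ε' hε'
    refine ⟨⟨{i // good i} × Fin f.natDegree, inferInstance,
      fun p ζ => g.eval (W p.1 p.2 ζ), fun p => ?_, fun p ζ hζ => ?_, fun a => ?_, ?_, ?_⟩⟩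
    · exact g.differentiable.comp_differentiableOn (hWd p.1 p.2)
    · refine Reach.snoc ?_
      rw [hWf p.1 ζ hζ]
      exact hreach p.1 ζ hζ
    · let P : ℂ → Set (({i // good i} × Fin f.natDegree) × ℂ) := fun u =>
        {p | p.2 ∈ Metric.ball z r ∧ W p.1.1 p.1.2 p.2 = u}
      have hP : ∀ u, (P u).encard ≤ ((g.natDegree ^ n : ℕ) : ℕ∞) := fun u => by
        refine (Set.encard_le_encard_of_injOn (f := fun p => (p.1.1.1, p.2)) ?_ ?_).trans
          (henc (f.eval u))
        · rintro ⟨⟨i, j⟩, ζ⟩ ⟨hζ, hu⟩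
          refine ⟨hζ, ?_⟩
          change h i ζ = _
          rw [← hWf i ζ hζ j]
          exact congrArg (fun w => f.eval w) hu
        · rintro ⟨⟨i, j⟩, ζ⟩ ⟨hζ, hu⟩ ⟨⟨i', j'⟩, ζ'⟩ ⟨hζ', hu'⟩ heq
          obtain ⟨h1, rfl⟩ := Prod.ext_iff.1 heq
          obtain rfl : i = i' := Subtype.ext h1
          obtain rfl := hWi i ζ hζ (hu.trans hu'.symm)
          rfl
      have hsub : {p : ({i // good i} × Fin f.natDegree) × ℂ | p.2 ∈ Metric.ball z r ∧
          g.eval (W p.1.1 p.1.2 p.2) = a} ⊆ ⋃ i : Fin g.natDegree, P (rt g a i) := by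
        rintro ⟨⟨i, j⟩, ζ⟩ ⟨hζ, hu⟩
        obtain ⟨k, hk⟩ := (mem_rt hg a _).2 hu
        exact Set.mem_iUnion.2 ⟨k, hζ, hk.symm⟩
      refine (Set.encard_le_encard hsub).trans ?_
      refine (Set.encard_iUnion_le_of_fintype _).trans ?_
      refine (Finset.sum_le_sum fun i _ => hP _).trans ?_
      rw [Finset.sum_const]
      simp [pow_succ, mul_comm]
    · rw [Fintype.card_prod, Fintype.card_fin, pow_succ]
      gcongr
      exact (Fintype.card_subtype_le _).trans hcard
    · intro φ M hM ζ hζ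
      have hM0 : 0 ≤ M := (abs_nonneg _).trans (hM 0)
      have hLM : ∀ y, |Lam f g φ y| ≤ M := fun y => Lam_iter_abs_le (n := 1) hf hM y
      have h1 := happ (Lam f g φ) M hLM ζ hζ
      rw [Function.iterate_succ_apply]
      have h2 : ((f.natDegree : ℝ) ^ n)⁻¹ * ∑ i, Lam f g φ (h i ζ) =
          ((f.natDegree : ℝ) ^ (n + 1))⁻¹ * ∑ p : {i // good i} × Fin f.natDegree,
            φ (g.eval (W p.1 p.2 ζ)) +
          ((f.natDegree : ℝ) ^ n)⁻¹ * ∑ i : {i // ¬ good i}, Lam f g φ (h i ζ) := by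
        rw [← Fintype.sum_subtype_add_sum_subtype good, mul_add, Fintype.sum_prod_type]
        congr 1
        rw [pow_succ, mul_inv, mul_assoc, Finset.mul_sum _ _ (f.natDegree : ℝ)⁻¹]
        congr 1
        refine Finset.sum_congr rfl fun i _ => ?_
        exact Lam_eq_of_injective hf g φ (hWi i ζ hζ) (hWf i ζ hζ)
      have h3 : |((f.natDegree : ℝ) ^ n)⁻¹ * ∑ i : {i // ¬ good i}, Lam f g φ (h i ζ)| ≤
          M * ((Fintype.card {i // ¬ good i} : ℝ) / (f.natDegree : ℝ) ^ n) := by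
        rw [abs_mul, abs_of_pos (by positivity), div_eq_inv_mul, mul_left_comm]
        gcongr
        refine (Finset.abs_sum_le_sum_abs _ _).trans
          ((Finset.sum_le_sum fun i _ => hLM _).trans ?_)
        rw [Finset.sum_const, nsmul_eq_mul, Finset.card_univ, mul_comm]
      rw [h2] at h1
      have h4 := mul_le_mul_of_nonneg_left hε' hM0
      rw [mul_add] at h4
      rw [abs_le] at *
      constructor <;> linarith [h1.1, h1.2, h3.1, h3.2]
  refine ⟨key _ ?_, fun hno => key _ ?_⟩
  · gcongr
    rw [div_pow, ← mul_div_assoc]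
    gcongr
  · have : IsEmpty {i // ¬ good i} :=
      ⟨fun i => i.2 fun ζ hζ hc => hno ζ hζ _ hc (hreach i ζ hζ)⟩
    simp

/-- If no critical value of `f` is met by fewer than `N` backward steps from the disc, then
inverse branches of every order exist, with an error which is a tail of a geometric series. -/
lemma exists_branches {f g : ℂ[X]} (hf : 0 < f.natDegree) (hg : 0 < g.natDegree) {z : ℂ} {r : ℝ}
    (hr : 0 < r) {N : ℕ}
    (hN : ∀ k < N, ∀ ζ ∈ Metric.ball z r, ∀ c ∈ CV f, ¬ Reach f g k ζ c) (n : ℕ) :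
    Nonempty (Branches f g z r n ((CV f).ncard *
      ∑ k ∈ Finset.Ico N n, ((g.natDegree : ℝ) / f.natDegree) ^ k)) := by
  induction n with
  | zero => simpa using Branches.zero f g z r
  | succ n ih =>
    obtain ⟨B⟩ := ih
    by_cases hn : N ≤ n
    · rw [Finset.sum_Ico_succ_top hn, mul_add]
      exact (B.step hf hg hr).1
    · have := (B.step hf hg hr).2 (hN n (not_le.1 hn))
      rw [Finset.Ico_eq_empty (by omega), Finset.sum_empty] at this ⊢
      exact this

/-! ### Near-equidistribution outside finite sets -/

/-- The uniform probability measure on the disc `ball z ρ`. -/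
noncomputable def unif (z : ℂ) (ρ : ℝ) : Measure ℂ :=
  ProbabilityTheory.cond volume (Metric.ball z ρ)

lemma unif_prob (z : ℂ) {ρ : ℝ} (hρ : 0 < ρ) : IsProbabilityMeasure (unif z ρ) :=
  ProbabilityTheory.cond_isProbabilityMeasure_of_finite
    (Metric.measure_ball_pos volume z hρ).ne' measure_ball_lt_top.ne

lemma ae_unif (z : ℂ) (ρ : ℝ) : ∀ᵐ ζ ∂(unif z ρ), ζ ∈ Metric.ball z ρ :=
  ProbabilityTheory.ae_cond_mem Metric.isOpen_ball.measurableSet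

lemma tendsto_unif {f g : ℂ[X]} {μ : Measure ℂ} (hμ : IsEquilibrium f g μ) (z : ℂ) {ρ : ℝ}
    (hρ : 0 < ρ) {φ : ℂ → ℝ} (hφ : Continuous φ) {M : ℝ} (hM : ∀ y, |φ y| ≤ M) :
    Tendsto (fun n => ∫ ζ, ((Lam f g)^[n] φ) ζ ∂(unif z ρ)) atTop (nhds (∫ y, φ y ∂μ)) := by
  have hpos := Metric.measure_ball_pos (volume : Measure ℂ) z hρ
  refine hμ.2.2 _ (unif_prob z hρ) ⟨Metric.closedBall z ρ, isCompact_closedBall z ρ, ?_⟩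
    ⟨(Metric.ball z ρ).indicator fun _ => (volume (Metric.ball z ρ))⁻¹,
      ⟨(volume (Metric.ball z ρ))⁻¹, ?_, fun ζ => ?_⟩, ?_⟩ φ hφ ⟨M, hM⟩
  · refine measure_mono_null ?_ (ae_unif z ρ)
    exact Set.compl_subset_compl.2 Metric.ball_subset_closedBall
  · exact ENNReal.inv_lt_top.2 hpos
  · exact Set.indicator_le_self' (fun _ _ => zero_le) _
  · rw [withDensity_indicator Metric.isOpen_ball.measurableSet, withDensity_const]
    rfl

lemma integrable_Lam_iter {f g : ℂ[X]} (hf : 0 < f.natDegree) {ν : Measure ℂ}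
    [IsFiniteMeasure ν] {φ : ℂ → ℝ} (hφ : Continuous φ) {M : ℝ} (hM : ∀ y, |φ y| ≤ M) (n : ℕ) :
    Integrable ((Lam f g)^[n] φ) ν :=
  Integrable.of_bound (continuous_Lam_iter hf g hφ n).aestronglyMeasurable M
    (Eventually.of_forall fun z => Lam_iter_abs_le hf hM z)

/-- The error committed by inverse branches when no critical value is met before time `N`. -/
noncomputable def err (f g : ℂ[X]) (N : ℕ) : ℝ :=
  (CV f).ncard * (((g.natDegree : ℝ) / f.natDegree) ^ N / (1 - (g.natDegree : ℝ) / f.natDegree))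

lemma ratio_lt_one {f g : ℂ[X]} (hfg : g.natDegree < f.natDegree) :
    (g.natDegree : ℝ) / f.natDegree < 1 := by
  rw [div_lt_one (by exact_mod_cast (Nat.zero_le _).trans_lt hfg)]
  exact_mod_cast hfg

lemma tendsto_err {f g : ℂ[X]} (hfg : g.natDegree < f.natDegree) :
    Tendsto (err f g) atTop (nhds 0) := by
  have h := tendsto_pow_atTop_nhds_zero_of_lt_one (r := (g.natDegree : ℝ) / f.natDegree)
    (by positivity) (ratio_lt_one hfg)
  have := (h.div_const (1 - (g.natDegree : ℝ) / f.natDegree)).const_mul ((CV f).ncard : ℝ)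
  rw [zero_div, mul_zero] at this
  exact this

lemma isOpen_avoid {f g : ℂ[X]} (hf : 0 < f.natDegree) (hg : 0 < g.natDegree) (N : ℕ) :
    IsOpen {z | ∀ k < N, z ∉ (Fwd f g)^[k] (CV f)} := by
  have : {z | ∀ k < N, z ∉ (Fwd f g)^[k] (CV f)} = (⋃ k ∈ Set.Iio N, (Fwd f g)^[k] (CV f))ᶜ := by
    ext; simp
  rw [this, isOpen_compl_iff]
  exact ((Set.finite_Iio N).biUnion fun k _ => finite_Fwd_iter hg (finite_CV hf) k).isClosed

/-- The Schwarz lemma makes the inverse branches equicontinuous, so up to the error `err f g N` the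
functions `Λⁿφ` are equicontinuous at `z`; averaging over a small disc around `z` and letting
`n → ∞`, the equilibrium property determines their limit. -/
lemma near_equidistribution {f g : ℂ[X]} (hdeg : g.degree < f.degree)
    (hfg : g.natDegree < f.natDegree) (hg : 0 < g.natDegree) {μ : Measure ℂ}
    (hμ : IsEquilibrium f g μ) {N : ℕ} {z : ℂ} (hz : ∀ k < N, z ∉ (Fwd f g)^[k] (CV f))
    {φ : ℂ → ℝ} (hφ : Continuous φ) {M : ℝ} (hM : ∀ y, |φ y| ≤ M) {δ : ℝ} (hδ : 0 < δ) :
    ∀ᶠ n in atTop, |(Lam f g)^[n] φ z - ∫ y, φ y ∂μ| ≤ 2 * M * err f g N + δ := by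
  have hf : 0 < f.natDegree := hg.trans hfg
  have hM0 : 0 ≤ M := (abs_nonneg _).trans (hM 0)
  obtain ⟨r, hr, hrs⟩ := Metric.isOpen_iff.1 (isOpen_avoid hf hg N) z hz
  have hN : ∀ k < N, ∀ ζ ∈ Metric.ball z r, ∀ c ∈ CV f, ¬ Reach f g k ζ c :=
    fun k hk ζ hζ c hc h => hrs hζ k hk ((mem_Fwd_iter f g k _ ζ).2 ⟨c, hc, h⟩)
  obtain ⟨R, hR0, hRpos, hR⟩ := exists_invariant_radius hdeg (‖z‖ + r)
  have huc := (isCompact_closedBall (0 : ℂ) R).uniformContinuousOn_of_continuous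
    hφ.continuousOn
  obtain ⟨η, hη, hηφ⟩ := Metric.uniformContinuousOn_iff.1 huc (δ / 2) (half_pos hδ)
  obtain ⟨ρ, hρ, hρr, hρη⟩ : ∃ ρ, 0 < ρ ∧ ρ ≤ r ∧ 2 * R / r * ρ ≤ η := by
    refine ⟨min r (η / (2 * R / r)), by positivity, min_le_left _ _, ?_⟩
    rw [← le_div_iff₀' (by positivity)]
    exact min_le_right _ _
  have hball : ∀ ζ ∈ Metric.ball z r, ‖ζ‖ ≤ R := fun ζ hζ => by
    have h1 : ‖ζ‖ ≤ ‖z‖ + ‖ζ - z‖ := by simpa using norm_add_le z (ζ - z)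
    have h2 : ‖ζ - z‖ < r := by rwa [← dist_eq_norm]
    linarith
  have hzb : z ∈ Metric.ball z r := Metric.mem_ball_self hr
  have hd : (0 : ℝ) < f.natDegree := by exact_mod_cast hf
  have hclose : ∀ n, ∀ ζ ∈ Metric.ball z ρ,
      |(Lam f g)^[n] φ z - (Lam f g)^[n] φ ζ| ≤ 2 * M * err f g N + δ / 2 := by
    intro n ζ hζ
    obtain ⟨B⟩ := exists_branches hf hg hr hN n
    have hζr := Metric.ball_subset_ball hρr hζ
    let _ := B.fin
    have h1 := B.approx φ M hM z hzb
    have h2 := B.approx φ M hM ζ hζr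
    have hval : ∀ i, ∀ x ∈ Metric.ball z r, ‖B.h i x‖ ≤ R := fun i x hx =>
      (B.reach i x hx).norm_le hR (hball x hx)
    have hi : ∀ i, |φ (B.h i z) - φ (B.h i ζ)| ≤ δ / 2 := fun i => by
      have hmaps : Set.MapsTo (B.h i) (Metric.ball z r) (Metric.closedBall (B.h i z) (2 * R)) :=
        fun x hx => by
          rw [Metric.mem_closedBall, dist_eq_norm]
          linarith [norm_sub_le (B.h i x) (B.h i z), hval i x hx, hval i z hzb]
      have h3 := Complex.dist_le_div_mul_dist_of_mapsTo_ball (B.diff i) hmaps hζr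
      have h4 : dist (B.h i z) (B.h i ζ) < η := by
        rw [dist_comm]
        refine h3.trans_lt (lt_of_lt_of_le ?_ hρη)
        gcongr
        exact hζ
      exact (hηφ _ (by simpa using hval i z hzb) _ (by simpa using hval i ζ hζr) h4).le
    have h3 : |((f.natDegree : ℝ) ^ n)⁻¹ * ∑ i, φ (B.h i z) -
        ((f.natDegree : ℝ) ^ n)⁻¹ * ∑ i, φ (B.h i ζ)| ≤ δ / 2 := by
      rw [← mul_sub, ← Finset.sum_sub_distrib, abs_mul, abs_of_pos (by positivity),
        inv_mul_le_iff₀ (by positivity)]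
      refine (Finset.abs_sum_le_sum_abs _ _).trans
        ((Finset.sum_le_sum fun i _ => hi i).trans ?_)
      rw [Finset.sum_const, nsmul_eq_mul, Finset.card_univ]
      gcongr
      exact_mod_cast B.card_le
    have h4 : M * ((CV f).ncard *
        ∑ k ∈ Finset.Ico N n, ((g.natDegree : ℝ) / f.natDegree) ^ k) ≤ M * err f g N := by
      unfold err
      gcongr
      exact geom_sum_Ico_le_of_lt_one (by positivity) (ratio_lt_one hfg)
    rw [abs_le] at *
    constructor <;> linarith [h1.1, h1.2, h2.1, h2.2, h3.1, h3.2]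
  have := unif_prob z hρ
  have hav : ∀ n, |(Lam f g)^[n] φ z - ∫ ζ, (Lam f g)^[n] φ ζ ∂(unif z ρ)| ≤
      2 * M * err f g N + δ / 2 := fun n => by
    have h1 : (Lam f g)^[n] φ z - ∫ ζ, (Lam f g)^[n] φ ζ ∂(unif z ρ) =
        ∫ ζ, ((Lam f g)^[n] φ z - (Lam f g)^[n] φ ζ) ∂(unif z ρ) := by
      rw [integral_sub (integrable_const _) (integrable_Lam_iter hf hφ hM n)]
      simp
    rw [h1]
    have h2 := norm_integral_le_of_norm_le_const (μ := unif z ρ)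
      (f := fun ζ => (Lam f g)^[n] φ z - (Lam f g)^[n] φ ζ) (C := 2 * M * err f g N + δ / 2) (by
        filter_upwards [ae_unif z ρ] with ζ hζ using hclose n ζ hζ)
    simpa using h2
  have hlim := Metric.tendsto_nhds.1 (tendsto_unif hμ z hρ hφ hM) (δ / 2) (half_pos hδ)
  filter_upwards [hlim] with n hn
  rw [Real.dist_eq] at hn
  have h1 := hav n
  rw [abs_le] at *
  rw [abs_lt] at hn
  constructor <;> linarith [h1.1, h1.2, hn.1, hn.2]

/-! ### The equilibrium measure does not charge points -/

/-- The additive constant by which `Λ` changes logarithmic potentials. -/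
noncomputable def logConst (f g : ℂ[X]) : ℝ :=
  (f.natDegree : ℝ)⁻¹ *
    (f.natDegree * Real.log ‖g.leadingCoeff‖ - g.natDegree * Real.log ‖f.leadingCoeff‖)

/-- Both products are the resultant of `f - z` and `g - a`, up to leading coefficients. -/
lemma norm_prod_eq {f g : ℂ[X]} (hf : 0 < f.natDegree) (hg : 0 < g.natDegree) (a z : ℂ) :
    ‖f.leadingCoeff‖ ^ g.natDegree * ∏ i, ‖g.eval (rt f z i) - a‖ =
      ‖g.leadingCoeff‖ ^ f.natDegree * ∏ j, ‖z - f.eval (rt g a j)‖ := by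
  have h1 : ∀ i, ‖g.eval (rt f z i) - a‖ =
      ‖g.leadingCoeff‖ * ∏ j, ‖rt f z i - rt g a j‖ := fun i => by
    rw [eval_sub_eq_prod g a _ hg, norm_mul, norm_prod]
  have h2 : ∀ j, ‖z - f.eval (rt g a j)‖ =
      ‖f.leadingCoeff‖ * ∏ i, ‖rt f z i - rt g a j‖ := fun j => by
    rw [norm_sub_rev, eval_sub_eq_prod f z _ hf, norm_mul, norm_prod]
    simp_rw [norm_sub_rev]
  simp_rw [h1, h2, Finset.prod_mul_distrib]
  rw [Finset.prod_comm]
  simp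
  ring

lemma Lam_log {f g : ℂ[X]} (hf : 0 < f.natDegree) (hg : 0 < g.natDegree) {a z : ℂ}
    (h : ∀ j, f.eval (rt g a j) ≠ z) :
    Lam f g (fun y => Real.log ‖y - a‖) z =
      (f.natDegree : ℝ)⁻¹ * ∑ j, Real.log ‖z - f.eval (rt g a j)‖ + logConst f g := by
  have hd : (0 : ℝ) < f.natDegree := by exact_mod_cast hf
  have hlf : ‖f.leadingCoeff‖ ≠ 0 :=
    norm_ne_zero_iff.2 (leadingCoeff_ne_zero.2 (ne_zero_of_natDegree_gt hf))
  have hlg : ‖g.leadingCoeff‖ ≠ 0 :=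
    norm_ne_zero_iff.2 (leadingCoeff_ne_zero.2 (ne_zero_of_natDegree_gt hg))
  have h1 : ∀ j, ‖z - f.eval (rt g a j)‖ ≠ 0 := fun j =>
    norm_ne_zero_iff.2 (sub_ne_zero.2 (h j).symm)
  have h2 : ∀ i, ‖g.eval (rt f z i) - a‖ ≠ 0 := fun i => by
    rw [norm_ne_zero_iff, sub_ne_zero]
    intro hi
    obtain ⟨j, hj⟩ := (mem_rt hg a _).2 hi
    exact h j (by rw [hj, eval_rt hf])
  have h3 := congrArg Real.log (norm_prod_eq hf hg a z)
  rw [Real.log_mul (pow_ne_zero _ hlf) (Finset.prod_ne_zero_iff.2 fun i _ => h2 i),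
    Real.log_mul (pow_ne_zero _ hlg) (Finset.prod_ne_zero_iff.2 fun i _ => h1 i),
    Real.log_pow, Real.log_pow, Real.log_prod fun i _ => h2 i,
    Real.log_prod fun i _ => h1 i] at h3
  rw [Lam_apply, logConst, ← mul_add]
  congr 1
  linarith

/-- The negative part of the logarithmic potential of the point `0`. -/
noncomputable def negLog (y : ℂ) : ℝ := max 0 (-Real.log ‖y‖)

lemma integrable_negLog : Integrable negLog (volume : Measure ℂ) := by
  have := (integrable_fun_norm_addHaar (volume : Measure ℂ)
    (f := fun t : ℝ => max 0 (-Real.log t)))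
  rw [show negLog = fun y : ℂ => max 0 (-Real.log ‖y‖) from rfl, this]
  have hz : Set.Ioi (0 : ℝ) = Set.Ioo 0 1 ∪ Set.Ici 1 := (Set.Ioo_union_Ici_eq_Ioi one_pos).symm
  rw [hz, integrableOn_union, Complex.finrank_real_complex]
  constructor
  · refine IntegrableOn.of_bound (by simp) ?_ 1 ?_
    · refine Measurable.aestronglyMeasurable ?_
      fun_prop
    · refine (ae_restrict_iff' measurableSet_Ioo).2 (Eventually.of_forall fun t ht => ?_)
      have h1 : 0 ≤ -Real.log t := by
        have := Real.log_nonpos ht.1.le ht.2.le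
        linarith
      rw [max_eq_right h1, smul_eq_mul, Real.norm_eq_abs]
      have h2 : -Real.log t ≤ t⁻¹ := by
        rw [← Real.log_inv]
        exact (Real.log_le_sub_one_of_pos (inv_pos.2 ht.1)).trans (by linarith)
      rw [abs_of_nonneg (mul_nonneg (by have := ht.1; positivity) h1)]
      calc t ^ (2 - 1) * -Real.log t ≤ t ^ (2 - 1) * t⁻¹ := by
            have := ht.1; gcongr
        _ = 1 := by have := ht.1.ne'; simp [this]
  · refine integrableOn_zero.congr_fun (fun t ht => ?_) measurableSet_Ici
    have : 0 ≤ Real.log t := Real.log_nonneg ht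
    simp [this]

lemma exists_bound_negLog : ∃ C₀ : ℝ, 0 ≤ C₀ ∧ ∀ a : ℂ,
    Integrable (fun z => negLog (z - a)) (unif 0 1) ∧
      ∫ z, negLog (z - a) ∂(unif 0 1) ≤ C₀ := by
  refine ⟨(volume (Metric.ball (0 : ℂ) 1))⁻¹.toReal * ∫ z, negLog z,
    mul_nonneg ENNReal.toReal_nonneg (integral_nonneg fun z => le_max_left _ _), fun a => ?_⟩
  have hvol := integrable_negLog.comp_sub_right a
  constructor
  · refine hvol.restrict.smul_measure ?_
    exact ENNReal.inv_ne_top.2 (Metric.measure_ball_pos volume 0 one_pos).ne'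
  · rw [unif, ProbabilityTheory.cond, integral_smul_measure, smul_eq_mul,
      ← integral_sub_right_eq_self (μ := (volume : Measure ℂ)) negLog a]
    refine mul_le_mul_of_nonneg_left ?_ ENNReal.toReal_nonneg
    exact setIntegral_le_integral hvol (Eventually.of_forall fun z => le_max_left _ _)

/-- The averages over the unit disc of the negative parts of `Λⁿ log‖· - a‖` are bounded uniformly
in `n` and `a`: each application of `Λ` replaces a potential by `deg g / deg f < 1` times an average
of potentials, plus a constant. -/
lemma potential_bound {f g : ℂ[X]} (hfg : g.natDegree < f.natDegree) (hg : 0 < g.natDegree) :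
    ∃ C₁ : ℝ, 0 ≤ C₁ ∧ ∀ (n : ℕ) (a : ℂ), ∃ J : ℂ → ℝ, Integrable J (unif 0 1) ∧
      ∫ z, J z ∂(unif 0 1) ≤ C₁ ∧
      ∀ z, ¬ Reach f g n z a → -(Lam f g)^[n] (fun y => Real.log ‖y - a‖) z ≤ J z := by
  have hf : 0 < f.natDegree := hg.trans hfg
  have hd : (0 : ℝ) < f.natDegree := by exact_mod_cast hf
  have hde : (0 : ℝ) < f.natDegree - g.natDegree := sub_pos.2 (by exact_mod_cast hfg)
  obtain ⟨C₀, hC₀, hC₀'⟩ := exists_bound_negLog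
  have := unif_prob (0 : ℂ) one_pos
  let C₁ := max C₀ (|logConst f g| * f.natDegree / (f.natDegree - g.natDegree))
  have hC₁ : |logConst f g| + (f.natDegree : ℝ)⁻¹ * (g.natDegree * C₁) ≤ C₁ := by
    have : |logConst f g| * f.natDegree / (f.natDegree - g.natDegree) ≤ C₁ := le_max_right _ _
    rw [div_le_iff₀ hde] at this
    rw [← mul_le_mul_iff_right₀ hd, mul_add, mul_inv_cancel_left₀ hd.ne']
    linarith
  refine ⟨C₁, hC₀.trans (le_max_left _ _), fun n => ?_⟩
  induction n with
  | zero =>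
    intro a
    exact ⟨fun z => negLog (z - a), (hC₀' a).1, (hC₀' a).2.trans (le_max_left _ _),
      fun z _ => le_max_right _ _⟩
  | succ n ih =>
    intro a
    choose J hJi hJb hJ using fun j => ih (f.eval (rt g a j))
    have hsum : Integrable (fun z => ∑ j, J j z) (unif 0 1) :=
      integrable_finsetSum _ fun j _ => hJi j
    refine ⟨fun z => |logConst f g| + (f.natDegree : ℝ)⁻¹ * ∑ j, J j z,
      (integrable_const _).add (hsum.const_mul _), ?_, fun z hz => ?_⟩
    · rw [integral_add (integrable_const _) (hsum.const_mul _), integral_const_mul,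
        integral_finsetSum _ fun j _ => hJi j]
      refine le_trans ?_ hC₁
      have : ∑ j, ∫ z, J j z ∂(unif 0 1) ≤ g.natDegree * C₁ := by
        refine (Finset.sum_le_sum fun j _ => hJb j).trans ?_
        simp
      simp only [integral_const, probReal_univ, one_smul]
      gcongr
    · have hz' : ∀ j, ¬ Reach f g n z (f.eval (rt g a j)) := fun j hj => by
        have := hj.snoc
        rw [eval_rt hg] at this
        exact hz this
      let ψ : ℂ → ℝ := (f.natDegree : ℝ)⁻¹ • ∑ j, (fun y => Real.log ‖y - f.eval (rt g a j)‖) +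
        fun _ => logConst f g
      have hLψ : ∀ y, Reach f g n z y → Lam f g (fun y => Real.log ‖y - a‖) y = ψ y := by
        intro y hy
        rw [Lam_log hf hg fun j hj => hz' j (hj ▸ hy)]
        simp [ψ]
      have h1 : (Lam f g)^[n + 1] (fun y => Real.log ‖y - a‖) z = (Lam f g)^[n] ψ z := by
        rw [Function.iterate_succ_apply]
        exact le_antisymm (Lam_iter_mono hf fun y hy => (hLψ y hy).le)
          (Lam_iter_mono hf fun y hy => (hLψ y hy).ge)
      have h2 : (Lam f g)^[n] ψ z = (f.natDegree : ℝ)⁻¹ *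
          ∑ j, (Lam f g)^[n] (fun y => Real.log ‖y - f.eval (rt g a j)‖) z + logConst f g := by
        rw [← LamL_pow, map_add, map_smul, map_sum]
        simp only [LamL_pow, Lam_iter_const hf]
        simp
      rw [h1, h2]
      have h3 := neg_abs_le (logConst f g)
      have h4 : -∑ j, (Lam f g)^[n] (fun y => Real.log ‖y - f.eval (rt g a j)‖) z ≤
          ∑ j, J j z := by
        rw [← Finset.sum_neg_distrib]
        exact Finset.sum_le_sum fun j _ => hJ j z (hz' j)
      have h5 := mul_le_mul_of_nonneg_left h4 (inv_pos.2 hd).le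
      rw [mul_neg] at h5
      linarith

/-- Each point carries zero mass for `μ`, expressed by test functions. -/
lemma exists_bump {f g : ℂ[X]} (hdeg : g.degree < f.degree) (hfg : g.natDegree < f.natDegree)
    (hg : 0 < g.natDegree) {μ : Measure ℂ} (hμ : IsEquilibrium f g μ) (a : ℂ) {ε : ℝ}
    (hε : 0 < ε) : ∃ φ : ℂ → ℝ, Continuous φ ∧ (∀ y, 0 ≤ φ y) ∧ (∀ y, φ y ≤ 1) ∧ φ a = 1 ∧
      ∫ y, φ y ∂μ < ε := by
  have hf : 0 < f.natDegree := hg.trans hfg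
  obtain ⟨C₁, hC₁, hJ⟩ := potential_bound hfg hg
  obtain ⟨R, hR1, hR0, hR⟩ := exists_invariant_radius hdeg 1
  let L := Real.log (R + ‖a‖ + 1)
  have hL : 0 ≤ L := Real.log_nonneg (by linarith [norm_nonneg a])
  obtain ⟨m, hm, hmε⟩ : ∃ m : ℝ, 0 < m ∧ (L + C₁) / m < ε := by
    refine ⟨(L + C₁ + 1) / ε, by positivity, ?_⟩
    rw [div_lt_iff₀ (by positivity), mul_div_cancel₀ _ hε.ne']
    linarith
  let φ : ℂ → ℝ := fun y => max 0 (min 1 (-Real.log (max ‖y - a‖ (Real.exp (-m))) / m))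
  have hφc : Continuous φ := by
    have h1 : Continuous fun y : ℂ => max ‖y - a‖ (Real.exp (-m)) := by fun_prop
    have h2 := h1.log fun y => ((Real.exp_pos _).trans_le (le_max_right _ _)).ne'
    exact continuous_const.max (continuous_const.min (h2.neg.div_const m))
  have hφ0 : ∀ y, 0 ≤ φ y := fun y => le_max_left _ _
  have hφ1 : ∀ y, φ y ≤ 1 := fun y => max_le zero_le_one (min_le_left _ _)
  have hφabs : ∀ y, |φ y| ≤ 1 := fun y => by rw [abs_of_nonneg (hφ0 y)]; exact hφ1 y
  have hφlog : ∀ y, ‖y‖ ≤ R → y ≠ a → φ y ≤ (L + -Real.log ‖y - a‖) / m := fun y hy hya => by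
    have hpos : 0 < ‖y - a‖ := norm_pos_iff.2 (sub_ne_zero.2 hya)
    refine max_le (div_nonneg ?_ hm.le) ((min_le_right _ _).trans ?_)
    · have : Real.log ‖y - a‖ ≤ L :=
        Real.log_le_log hpos (by linarith [norm_sub_le y a])
      linarith
    · gcongr
      have : Real.log ‖y - a‖ ≤ Real.log (max ‖y - a‖ (Real.exp (-m))) :=
        Real.log_le_log hpos (le_max_left _ _)
      linarith
  refine ⟨φ, hφc, hφ0, hφ1, ?_, lt_of_le_of_lt ?_ hmε⟩
  · simp [φ, (Real.exp_pos (-m)).le, hm.ne']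
  have := unif_prob (0 : ℂ) one_pos
  refine le_of_tendsto' (tendsto_unif hμ 0 one_pos hφc hφabs) fun n => ?_
  obtain ⟨J, hJi, hJb, hJl⟩ := hJ n a
  have hfin : {z | Reach f g n z a}.Finite := by
    refine (finite_Fwd_iter (f := f) hg (Set.finite_singleton a) n).subset fun z hz => ?_
    exact (mem_Fwd_iter f g n _ z).2 ⟨a, rfl, hz⟩
  have hnull : ∀ᵐ z ∂(unif 0 1), ¬ Reach f g n z a := by
    refine (ProbabilityTheory.cond_absolutelyContinuous).ae_le ?_
    exact compl_mem_ae_iff.2 (hfin.measure_zero volume)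
  have hmono : ∫ z, (Lam f g)^[n] φ z ∂(unif 0 1) ≤ ∫ z, (L + J z) / m ∂(unif 0 1) := by
    refine integral_mono_ae (integrable_Lam_iter hf hφc hφabs n)
      (((integrable_const L).add hJi).div_const m) ?_
    filter_upwards [hnull, ae_unif 0 1] with z hz hz1
    have hzR : ‖z‖ ≤ R := by
      have : ‖z‖ < 1 := by simpa using hz1
      linarith
    have h1 : (Lam f g)^[n] φ z ≤
        (Lam f g)^[n] (m⁻¹ • ((fun _ => L) - fun y => Real.log ‖y - a‖)) z := by
      refine Lam_iter_mono hf fun y hy => ?_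
      refine (hφlog y (hy.norm_le hR hzR) fun h => hz (h ▸ hy)).trans (le_of_eq ?_)
      simp [div_eq_inv_mul, sub_eq_add_neg]
    refine h1.trans ?_
    rw [← LamL_pow, map_smul, map_sub]
    simp only [LamL_pow, Lam_iter_const hf, Pi.smul_apply, Pi.sub_apply, smul_eq_mul]
    rw [div_eq_inv_mul]
    gcongr
    linarith [hJl z hz]
  refine hmono.trans ?_
  rw [integral_div, integral_add (integrable_const L) hJi]
  simp only [integral_const, probReal_univ, one_smul]
  gcongr

lemma exists_bump_finite {f g : ℂ[X]} (hdeg : g.degree < f.degree)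
    (hfg : g.natDegree < f.natDegree) (hg : 0 < g.natDegree) {μ : Measure ℂ}
    (hμ : IsEquilibrium f g μ) {S : Set ℂ} (hS : S.Finite) {ε : ℝ} (hε : 0 < ε) :
    ∃ φ : ℂ → ℝ, Continuous φ ∧ (∀ y, 0 ≤ φ y) ∧ (∀ y, φ y ≤ 1) ∧ (∀ y ∈ S, φ y = 1) ∧
      ∫ y, φ y ∂μ < ε := by
  have := hμ.1
  induction S, hS using Set.Finite.induction_on generalizing ε with
  | empty => exact ⟨fun _ => 0, continuous_const, by simp, by simp, by simp, by simpa⟩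
  | @insert a S _ _ ih =>
    obtain ⟨φ, hφ, hφ0, hφ1, hφS, hφε⟩ := ih (half_pos hε)
    obtain ⟨ψ, hψ, hψ0, hψ1, hψa, hψε⟩ := exists_bump hdeg hfg hg hμ a (half_pos hε)
    refine ⟨fun y => max (φ y) (ψ y), hφ.max hψ, fun y => (hφ0 y).trans (le_max_left _ _),
      fun y => max_le (hφ1 y) (hψ1 y), fun y hy => ?_, ?_⟩
    · rcases hy with rfl | hy
      · exact le_antisymm (max_le (hφ1 _) (hψ1 _)) (hψa.ge.trans (le_max_right _ _))
      · exact le_antisymm (max_le (hφ1 _) (hψ1 _)) ((hφS y hy).ge.trans (le_max_left _ _))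
    · have hi : ∀ χ : ℂ → ℝ, Continuous χ → (∀ y, 0 ≤ χ y) → (∀ y, χ y ≤ 1) → Integrable χ μ :=
        fun χ h h0 h1 => Integrable.of_bound h.aestronglyMeasurable 1
          (Eventually.of_forall fun y => by
            rw [Real.norm_eq_abs, abs_of_nonneg (h0 y)]; exact h1 y)
      have hφi := hi φ hφ hφ0 hφ1
      have hψi := hi ψ hψ hψ0 hψ1
      calc ∫ y, max (φ y) (ψ y) ∂μ ≤ ∫ y, (φ y + ψ y) ∂μ :=
            integral_mono (hφi.sup hψi) (hφi.add hψi) fun y =>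
              max_le (by simpa using hψ0 y) (by simpa using hφ0 y)
        _ = ∫ y, φ y ∂μ + ∫ y, ψ y ∂μ := integral_add hφi hψi
        _ < ε := by linarith

/-! ### Finite backward invariant sets and the maximum principle -/

/-- Backward image under the correspondence. -/
def Bwd (f g : ℂ[X]) (S : Set ℂ) : Set ℂ := (fun w => g.eval w) '' ((fun w => f.eval w) ⁻¹' S)

lemma Bwd_mono {f g : ℂ[X]} {S T : Set ℂ} (h : S ⊆ T) : Bwd f g S ⊆ Bwd f g T :=
  Set.image_mono (Set.preimage_mono h)

lemma Reach.mem {f g : ℂ[X]} {S : Set ℂ} (hS : Bwd f g S ⊆ S) {n : ℕ} {z y : ℂ}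
    (h : Reach f g n z y) (hz : z ∈ S) : y ∈ S := by
  induction n generalizing z with
  | zero => exact h ▸ hz
  | succ n ih =>
    obtain ⟨w, rfl, h⟩ := h
    exact ih h (hS ⟨w, hz, rfl⟩)

lemma Lam_iter_eq_one {f g : ℂ[X]} (hf : 0 < f.natDegree) {S : Set ℂ} (hS : Bwd f g S ⊆ S)
    {φ : ℂ → ℝ} (hφ : ∀ y ∈ S, φ y = 1) (n : ℕ) {z : ℂ} (hz : z ∈ S) :
    (Lam f g)^[n] φ z = 1 := by
  have h1 := Lam_iter_mono (f := f) (g := g) (n := n) (φ := φ) (ψ := fun _ => 1) (z := z) hf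
    fun y hy => (hφ y (hy.mem hS hz)).le
  have h2 := Lam_iter_mono (f := f) (g := g) (n := n) (φ := fun _ => 1) (ψ := φ) (z := z) hf
    fun y hy => (hφ y (hy.mem hS hz)).ge
  rw [Lam_iter_const hf] at h1 h2
  exact le_antisymm h1 h2

/-- A point reached in `k` steps carries a share of at least `(deg f)⁻ᵏ` in `Λᵏ`. -/
lemma le_Lam_iter_of_reach {f g : ℂ[X]} (hf : 0 < f.natDegree) {φ : ℂ → ℝ} (hφ : ∀ y, 0 ≤ φ y)
    {k : ℕ} {z y : ℂ} (h : Reach f g k z y) :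
    ((f.natDegree : ℝ) ^ k)⁻¹ * φ y ≤ (Lam f g)^[k] φ z := by
  induction k generalizing z with
  | zero => obtain rfl : z = y := h; simp
  | succ k ih =>
    obtain ⟨w, hw, h⟩ := h
    obtain ⟨i, rfl⟩ := (mem_rt hf z w).2 hw
    rw [Function.iterate_succ_apply', Lam_apply, pow_succ', mul_inv, mul_assoc]
    gcongr
    have h0 : ∀ x, 0 ≤ (Lam f g)^[k] φ x := fun x => by
      have := Lam_iter_mono (f := f) (g := g) (n := k) (φ := fun _ => 0) (ψ := φ) (z := x) hf
        fun y _ => hφ y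
      rwa [Lam_iter_const hf] at this
    exact (ih h).trans (Finset.single_le_sum
      (f := fun i => (Lam f g)^[k] φ (g.eval (rt f z i))) (fun j _ => h0 _) (Finset.mem_univ i))

/-- On a finite backward invariant set `Λⁿφ` remains `1` if `φ` is `1` there, although `∫ φ dμ` may
be arbitrarily small; so near-equidistribution confines all such sets to one finite set. -/
lemma exists_confinement {f g : ℂ[X]} (hdeg : g.degree < f.degree)
    (hfg : g.natDegree < f.natDegree) (hg : 0 < g.natDegree) {μ : Measure ℂ}
    (hμ : IsEquilibrium f g μ) :
    ∃ V : Set ℂ, V.Finite ∧ ∀ S : Set ℂ, S.Finite → Bwd f g S ⊆ S → S ⊆ V := by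
  have hf : 0 < f.natDegree := hg.trans hfg
  obtain ⟨N, hN⟩ :=
    ((tendsto_err hfg).eventually_lt_const (show (0 : ℝ) < 1 / 4 by norm_num)).exists
  refine ⟨⋃ k ∈ Set.Iio N, (Fwd f g)^[k] (CV f),
    (Set.finite_Iio N).biUnion fun k _ => finite_Fwd_iter hg (finite_CV hf) k,
    fun S hS hSS z hz => ?_⟩
  by_contra hzV
  simp only [Set.mem_iUnion, Set.mem_Iio, not_exists] at hzV
  obtain ⟨φ, hφ, hφ0, hφ1, hφS, hφε⟩ :=
    exists_bump_finite hdeg hfg hg hμ hS (show (0 : ℝ) < 1 / 4 by norm_num)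
  have hM : ∀ y, |φ y| ≤ 1 := fun y => by rw [abs_of_nonneg (hφ0 y)]; exact hφ1 y
  obtain ⟨n, hn⟩ := (near_equidistribution hdeg hfg hg hμ (fun k hk => hzV k hk) hφ hM
    (show (0 : ℝ) < 1 / 8 by norm_num)).exists
  rw [Lam_iter_eq_one hf hSS hφS n hz] at hn
  linarith [(abs_le.1 hn).2]

lemma exists_invariant_subset {f g : ℂ[X]} (hf : 0 < f.natDegree) {S : Set ℂ} (hS : S.Finite)
    (hne : S.Nonempty) (hSS : Bwd f g S ⊆ S) : ∃ T ⊆ S, T.Nonempty ∧ Bwd f g T = T := by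
  induction hn : S.ncard using Nat.strong_induction_on generalizing S with
  | _ n ih =>
    by_cases hEq : Bwd f g S = S
    · exact ⟨S, subset_rfl, hne, hEq⟩
    · have hss : Bwd f g S ⊂ S := hSS.ssubset_of_ne hEq
      have hne' : (Bwd f g S).Nonempty := by
        obtain ⟨y, hy⟩ := hne
        refine ⟨_, rt f y ⟨0, hf⟩, ?_, rfl⟩
        change f.eval _ ∈ S
        rwa [eval_rt hf]
      obtain ⟨T, hT, h⟩ := ih _ (hn ▸ Set.ncard_lt_ncard hss hS) (hS.subset hSS) hne'
        (Bwd_mono hSS) rfl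
      exact ⟨T, hT.trans hSS, h⟩

/-- Maximum principle: if `θ ≤ Λθ` and `θ` is positive at `z`, then the points of the backward orbit
of `z` where `θ` is maximal form a backward invariant set. -/
lemma maximum_principle {f g : ℂ[X]} (hf : 0 < f.natDegree) {θ : ℂ → ℝ}
    (hθ : ∀ z, θ z ≤ Lam f g θ z) (hfin : ∀ ε > 0, {z | ε ≤ θ z}.Finite) {z : ℂ} (hz : 0 < θ z) :
    ∃ T : Set ℂ, T.Finite ∧ Bwd f g T = T ∧ ∃ n, z ∈ (Fwd f g)^[n] T := by
  have hd : (0 : ℝ) < f.natDegree := by exact_mod_cast hf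
  have hQ : {y | (∃ n, Reach f g n z y) ∧ θ z ≤ θ y}.Finite :=
    (hfin _ hz).subset fun y hy => hy.2
  obtain ⟨y₀, ⟨⟨n₀, hy₀⟩, hy₀z⟩, hmax⟩ :=
    hQ.exists_maximalFor θ _ ⟨z, ⟨0, rfl⟩, le_rfl⟩
  have hle : ∀ y, (∃ n, Reach f g n z y) → θ y ≤ θ y₀ := fun y hy => by
    by_contra! hlt
    exact absurd (hmax ⟨hy, hy₀z.trans hlt.le⟩ hlt.le) (not_le.2 hlt)
  let S : Set ℂ := {y | (∃ n, Reach f g n z y) ∧ θ y = θ y₀}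
  have hSfin : S.Finite := (hfin _ (hz.trans_le hy₀z)).subset fun y hy => hy.2.ge
  have hSS : Bwd f g S ⊆ S := by
    rintro _ ⟨w, ⟨⟨n, hn⟩, hw⟩, rfl⟩
    have hr : ∀ i, ∃ m, Reach f g m z (g.eval (rt f (f.eval w) i)) := fun i =>
      ⟨n + 1, Reach.snoc (by rwa [eval_rt hf])⟩
    refine ⟨⟨n + 1, hn.snoc⟩, ?_⟩
    obtain ⟨i, hi⟩ := (mem_rt hf (f.eval w) w).2 rfl
    by_contra hne
    have hlt : θ (g.eval w) < θ y₀ := lt_of_le_of_ne (hle _ ⟨n + 1, hn.snoc⟩) hne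
    have hsum : ∑ i, θ (g.eval (rt f (f.eval w) i)) < ∑ _i : Fin f.natDegree, θ y₀ :=
      Finset.sum_lt_sum (fun i _ => hle _ (hr i)) ⟨i, Finset.mem_univ i, by rwa [hi]⟩
    have h1 := hθ (f.eval w)
    rw [Lam_apply, show θ (f.eval w) = θ y₀ from hw, ← div_eq_inv_mul, le_div_iff₀ hd] at h1
    rw [Finset.sum_const, nsmul_eq_mul, Finset.card_univ, Fintype.card_fin] at hsum
    linarith
  obtain ⟨T, hTS, ⟨y, hy⟩, hT⟩ := exists_invariant_subset hf hSfin ⟨y₀, ⟨n₀, hy₀⟩, rfl⟩ hSS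
  obtain ⟨⟨n, hn⟩, -⟩ := hTS hy
  exact ⟨T, hSfin.subset hTS, hT, n, (mem_Fwd_iter f g n T z).2 ⟨y, hy, hn⟩⟩

/-- The maximum principle applied to `θ = limsup |Λⁿφ - ∫ φ dμ|`, whose superlevel sets are finite
by near-equidistribution. -/
lemma tendsto_of_not_mem {f g : ℂ[X]} (hdeg : g.degree < f.degree)
    (hfg : g.natDegree < f.natDegree) (hg : 0 < g.natDegree) {μ : Measure ℂ}
    (hμ : IsEquilibrium f g μ) {z : ℂ}
    (hz : ∀ T : Set ℂ, T.Finite → Bwd f g T = T → ∀ n, z ∉ (Fwd f g)^[n] T)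
    {φ : ℂ → ℝ} (hφ : Continuous φ) {M : ℝ} (hM : ∀ y, |φ y| ≤ M) :
    Tendsto (fun n => (Lam f g)^[n] φ z) atTop (nhds (∫ y, φ y ∂μ)) := by
  have hf : 0 < f.natDegree := hg.trans hfg
  have hd : (0 : ℝ) < f.natDegree := by exact_mod_cast hf
  set c := ∫ y, φ y ∂μ with hc
  let u : ℂ → ℕ → ℝ := fun y n => |(Lam f g)^[n] φ y - c|
  have hu0 : ∀ y n, 0 ≤ u y n := fun y n => abs_nonneg _
  have huM : ∀ y n, u y n ≤ M + |c| := fun y n =>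
    (abs_sub _ _).trans (by gcongr; exact Lam_iter_abs_le hf hM y)
  have hbd : ∀ y, IsBoundedUnder (· ≤ ·) atTop (u y) := fun y =>
    isBoundedUnder_of ⟨_, huM y⟩
  have hcobd : ∀ y, IsCoboundedUnder (· ≤ ·) atTop (u y) := fun y =>
    (isBoundedUnder_of ⟨0, hu0 y⟩ : IsBoundedUnder (· ≥ ·) atTop (u y)).isCoboundedUnder_le
  let θ : ℂ → ℝ := fun y => limsup (u y) atTop
  have hθle : ∀ y b, (∀ᶠ n in atTop, u y n ≤ b) → θ y ≤ b := fun y b h =>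
    limsup_le_of_le (hcobd y) h
  have hθlt : ∀ y δ, 0 < δ → ∀ᶠ n in atTop, u y n < θ y + δ := fun y δ hδ =>
    eventually_lt_of_limsup_lt (lt_add_of_pos_right _ hδ) (hbd y)
  have hθsub : ∀ y, θ y ≤ Lam f g θ y := fun y => by
    -- `Λ` averages, so `|Λⁿ⁺¹φ(y) - c|` is at most the mean of `|Λⁿφ - c|` over `F⁻¹(y)`
    refine le_of_forall_pos_le_add fun δ hδ => hθle y _ ?_
    have hall : ∀ᶠ n in atTop, ∀ i, u (g.eval (rt f y i)) n < θ (g.eval (rt f y i)) + δ :=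
      eventually_all.2 fun i => hθlt _ δ hδ
    rw [← map_add_atTop_eq_nat 1, eventually_map]
    filter_upwards [hall] with n hn
    have h1 : (Lam f g)^[n + 1] φ y - c =
        (f.natDegree : ℝ)⁻¹ * ∑ i, ((Lam f g)^[n] φ (g.eval (rt f y i)) - c) := by
      rw [Function.iterate_succ_apply', Lam_apply, Finset.sum_sub_distrib, mul_sub]
      simp [hd.ne']
    have h2 : Lam f g θ y + δ =
        (f.natDegree : ℝ)⁻¹ * ∑ i, (θ (g.eval (rt f y i)) + δ) := by
      rw [Lam_apply, Finset.sum_add_distrib, mul_add]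
      simp [hd.ne']
    change |_| ≤ _
    rw [h1, h2, abs_mul, abs_of_pos (inv_pos.2 hd)]
    gcongr
    exact (Finset.abs_sum_le_sum_abs _ _).trans (Finset.sum_le_sum fun i _ => (hn i).le)
  have hθfin : ∀ ε > 0, {y | ε ≤ θ y}.Finite := fun ε hε => by
    have hlim : Tendsto (fun N => 2 * M * err f g N) atTop (nhds 0) := by
      simpa using (tendsto_err hfg).const_mul (2 * M)
    obtain ⟨N, hN⟩ := (hlim.eventually_lt_const (show (0 : ℝ) < ε / 3 by linarith)).exists
    refine ((Set.finite_Iio N).biUnion fun k _ =>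
      finite_Fwd_iter (f := f) hg (finite_CV hf) k).subset fun y hy => ?_
    by_contra hyV
    simp only [Set.mem_iUnion, Set.mem_Iio, not_exists] at hyV
    have hε3 : 0 < ε / 3 := by linarith
    have h1 := hθle y _ (near_equidistribution hdeg hfg hg hμ (fun k hk => hyV k hk) hφ hM hε3)
    have hy' : ε ≤ θ y := hy
    linarith
  have hθ0 : θ z ≤ 0 := by
    by_contra! hpos
    obtain ⟨T, hT, hTT, n, hn⟩ := maximum_principle hf hθsub hθfin hpos
    exact hz T hT hTT n hn
  rw [tendsto_iff_dist_tendsto_zero]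
  refine Metric.tendsto_nhds.2 fun δ hδ => ?_
  filter_upwards [hθlt z δ hδ] with n hn
  have h1 : u z n < δ := by linarith
  simpa [Real.dist_eq, u] using h1

theorem exceptional_set_algebraic
    (f g : Polynomial ℂ) (hdeg : g.degree < f.degree) (hg : 1 ≤ g.degree)
    (μ : Measure ℂ) (hμ : IsEquilibrium f g μ) :
    ∃ E₀ : Set ℂ, E₀.Finite ∧
      (fun w => g.eval w) '' ((fun w => f.eval w) ⁻¹' E₀) = E₀ ∧
      (∀ E' : Set ℂ, E'.Finite →
        (fun w => g.eval w) '' ((fun w => f.eval w) ⁻¹' E') = E' → E' ⊆ E₀) ∧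
      (∀ z : ℂ,
        (∀ φ : ℂ → ℝ, Continuous φ → (∃ M : ℝ, ∀ w, |φ w| ≤ M) →
          Tendsto (fun n => ((Lam f g)^[n] φ) z) atTop (nhds (∫ w, φ w ∂μ))) ↔
        z ∉ ⋃ n : ℕ,
          (fun S : Set ℂ => (fun w => f.eval w) '' ((fun w => g.eval w) ⁻¹' S))^[n] E₀) := by
  have hg0 : 0 < g.natDegree := natDegree_pos_iff_degree_pos.2 (lt_of_lt_of_le (by simp) hg)
  have hfg : g.natDegree < f.natDegree :=
    natDegree_lt_natDegree (ne_zero_of_natDegree_gt hg0) hdeg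
  have hf : 0 < f.natDegree := hg0.trans hfg
  obtain ⟨V, hV, hVS⟩ := exists_confinement hdeg hfg hg0 hμ
  let E₀ : Set ℂ := ⋃₀ {S | S.Finite ∧ Bwd f g S = S}
  have hE₀fin : E₀.Finite := hV.subset (Set.sUnion_subset fun S hS => hVS S hS.1 hS.2.subset)
  have hsub : ∀ S : Set ℂ, S.Finite → Bwd f g S = S → S ⊆ E₀ := fun S h1 h2 =>
    Set.subset_sUnion_of_mem (show S ∈ {S | S.Finite ∧ Bwd f g S = S} from ⟨h1, h2⟩)
  have hE₀inv : Bwd f g E₀ = E₀ := by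
    refine Set.Subset.antisymm ?_ (Set.sUnion_subset fun S hS => ?_)
    · rintro _ ⟨w, ⟨S, hS, hw⟩, rfl⟩
      exact ⟨S, hS, hS.2.subset ⟨w, hw, rfl⟩⟩
    · exact hS.2.superset.trans (Bwd_mono (hsub S hS.1 hS.2))
  refine ⟨E₀, hE₀fin, hE₀inv, hsub, fun z => ⟨fun h hz => ?_, fun hz φ hφ ⟨M, hM⟩ => ?_⟩⟩
  · obtain ⟨k, hk⟩ := Set.mem_iUnion.1 hz
    obtain ⟨y, hy, hr⟩ := (mem_Fwd_iter f g k E₀ z).1 hk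
    have hd : (0 : ℝ) < f.natDegree := by exact_mod_cast hf
    -- a test function equal to `1` on `E₀` with integral less than the mass `Λᵏ` puts on `y`
    obtain ⟨φ, hφ, hφ0, hφ1, hφS, hφε⟩ := exists_bump_finite hdeg hfg hg0 hμ hE₀fin
      (show 0 < ((f.natDegree : ℝ) ^ k)⁻¹ by positivity)
    have hlim := h φ hφ ⟨1, fun w => by rw [abs_of_nonneg (hφ0 w)]; exact hφ1 w⟩
    refine absurd hφε (not_lt.2 (ge_of_tendsto hlim ?_))
    filter_upwards [eventually_ge_atTop k] with n hn
    obtain ⟨m, rfl⟩ := Nat.exists_eq_add_of_le hn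
    have hnn : ∀ x, 0 ≤ (Lam f g)^[m] φ x := fun x => by
      have := Lam_iter_mono (f := f) (g := g) (n := m) (φ := fun _ => 0) (ψ := φ) (z := x) hf
        fun y _ => hφ0 y
      rwa [Lam_iter_const hf] at this
    have := le_Lam_iter_of_reach hf hnn hr
    rwa [Lam_iter_eq_one hf hE₀inv.subset hφS m hy, mul_one, ← Function.iterate_add_apply] at this
  · refine tendsto_of_not_mem hdeg hfg hg0 hμ (fun T hT hTT n hn => hz ?_) hφ hM
    obtain ⟨y, hy, hr⟩ := (mem_Fwd_iter f g n T z).1 hn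
    exact Set.mem_iUnion.2 ⟨n, (mem_Fwd_iter f g n E₀ z).2 ⟨y, hsub T hT hTT hy, hr⟩⟩
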